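/- For all integers L, M, i, j with 0 ≤ i ≤ M, 0 ≤ i ≤ L and 0 ≤ j ≤ L, the identity q^{T_i + T_j} [M; i] [L; j] = \sum_{k=0}^{\min(i,j)} q^{T_{i+j-k} + T_k} \binom{M}{M-i, i-k, k}_q [L-i; j-k] holds as an identity of polynomials in q, where \binom{M}{M-i, i-k, k}_q = (q)_M / ((q)_{M-i} (q)_{i-k} (q)_k) is the q-multinomial coefficient of order 3 and [m; r] denotes the Gaussian binomial coefficient. -/

import Mathlib

open Finset

/-- `(q)_n = (q;q)_n = ∏_{t=0}^{n-1} (1 - q^{t+1})` in `ℚ(q)`. -/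
noncomputable def qPoch (n : ℕ) : RatFunc ℚ :=
  ∏ t ∈ Finset.range n, (1 - (RatFunc.X : RatFunc ℚ) ^ (t + 1))

/-- The Gaussian (q-)binomial coefficient `[m; r] = (q)_m / ((q)_r (q)_{m-r})` for
`0 ≤ r ≤ m`, and `0` otherwise. -/
noncomputable def qbin (m r : ℤ) : RatFunc ℚ :=
  if 0 ≤ r ∧ r ≤ m then qPoch m.toNat / (qPoch r.toNat * qPoch (m - r).toNat) else 0

/-- The q-multinomial coefficient of order 3,
`[u+v+w; u, v, w] = (q)_{u+v+w} / ((q)_u (q)_v (q)_w)`, set to `0` if any of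
`u, v, w` is negative. -/
noncomputable def qtrinom (u v w : ℤ) : RatFunc ℚ :=
  if 0 ≤ u ∧ 0 ≤ v ∧ 0 ≤ w then
    qPoch (u + v + w).toNat / (qPoch u.toNat * qPoch v.toNat * qPoch w.toNat) else 0

/-- `T n = n(n+1)/2`, the n-th triangular number (on `ℤ`, the division is exact). -/
def triZ (n : ℤ) : ℤ := n * (n + 1) / 2

/-- Gaussian binomials by the Pascal recurrence. -/
noncomputable def gaussRec : ℕ → ℕ → RatFunc ℚ
  | _, 0 => 1
  | 0, _ + 1 => 0
  | m + 1, r + 1 => gaussRec m r + (RatFunc.X : RatFunc ℚ) ^ (r + 1) * gaussRec m (r + 1)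

lemma gaussRec_zero_right (m : ℕ) : gaussRec m 0 = 1 := by cases m <;> rfl

lemma gaussRec_succ (m r : ℕ) : gaussRec (m + 1) (r + 1) =
    gaussRec m r + (RatFunc.X : RatFunc ℚ) ^ (r + 1) * gaussRec m (r + 1) := rfl

lemma gaussRec_eq_zero (m : ℕ) : ∀ r, m < r → gaussRec m r = 0 := by
  induction m with
  | zero => intro r hr; obtain ⟨r, rfl⟩ := Nat.exists_eq_succ_of_ne_zero hr.ne'; rfl
  | succ m ih =>
    intro r hr
    obtain ⟨r, rfl⟩ := Nat.exists_eq_succ_of_ne_zero (by omega : r ≠ 0)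
    rw [Nat.succ_eq_add_one, gaussRec_succ, ih r (by omega), ih (r + 1) (by omega)]
    simp

lemma one_sub_X_pow_ne (t : ℕ) : (1 - (RatFunc.X : RatFunc ℚ) ^ (t + 1)) ≠ 0 := by
  intro h
  have h1 : (algebraMap (Polynomial ℚ) (RatFunc ℚ)) (Polynomial.X ^ (t + 1)) =
      algebraMap (Polynomial ℚ) (RatFunc ℚ) 1 := by
    rw [map_pow, RatFunc.algebraMap_X, map_one]
    exact (sub_eq_zero.mp h).symm
  have h2 := RatFunc.algebraMap_injective ℚ h1
  have h3 := congrArg Polynomial.natDegree h2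
  simp at h3

lemma qPoch_ne (n : ℕ) : qPoch n ≠ 0 :=
  Finset.prod_ne_zero_iff.mpr fun t _ => one_sub_X_pow_ne t

lemma qPoch_succ (n : ℕ) :
    qPoch (n + 1) = qPoch n * (1 - (RatFunc.X : RatFunc ℚ) ^ (n + 1)) :=
  Finset.prod_range_succ _ _

lemma gaussRec_mul (m : ℕ) : ∀ r s, r + s = m →
    gaussRec m r * (qPoch r * qPoch s) = qPoch m := by
  induction m with
  | zero =>
    intro r s h
    obtain ⟨rfl, rfl⟩ : r = 0 ∧ s = 0 := by omega
    simp [gaussRec_zero_right, qPoch]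
  | succ m ih =>
    intro r s h
    rcases r with _ | r
    · obtain rfl : s = m + 1 := by omega
      simp [gaussRec_zero_right, qPoch]
    · rw [gaussRec_succ]
      have h1 := ih r s (by omega)
      rcases s with _ | s
      · obtain rfl : r = m := by omega
        rw [gaussRec_eq_zero r (r + 1) (by omega), qPoch_succ r]
        linear_combination (1 - (RatFunc.X : RatFunc ℚ) ^ (r + 1)) * h1
      · have h2 := ih (r + 1) s (by omega)
        obtain rfl : m = r + 1 + s := by omega
        rw [qPoch_succ (r + 1 + s)]
        rw [qPoch_succ s] at h1 ⊢
        rw [qPoch_succ r] at h2 ⊢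
        linear_combination (1 - (RatFunc.X : RatFunc ℚ) ^ (r + 1)) * h1 +
          (RatFunc.X : RatFunc ℚ) ^ (r + 1) * (1 - (RatFunc.X : RatFunc ℚ) ^ (s + 1)) * h2

lemma qbin_eq (m r : ℕ) : qbin m r = gaussRec m r := by
  unfold qbin
  split_ifs with h
  · have hr : r ≤ m := by omega
    have e : ((m : ℤ) - r).toNat = m - r := by omega
    rw [e, Int.toNat_natCast, Int.toNat_natCast,
      div_eq_iff (mul_ne_zero (qPoch_ne _) (qPoch_ne _)),
      gaussRec_mul m r (m - r) (by omega)]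
  · rw [gaussRec_eq_zero m r (by omega)]

/-- q-Vandermonde. -/
lemma gaussRec_vandermonde (n m : ℕ) : ∀ j, gaussRec (m + n) j =
    ∑ p ∈ Finset.HasAntidiagonal.antidiagonal j,
      (RatFunc.X : RatFunc ℚ) ^ ((m - p.1) * p.2) * gaussRec m p.1 * gaussRec n p.2 := by
  induction m with
  | zero =>
    intro j
    rcases j with _ | j
    · simp [gaussRec_zero_right]
    · rw [Finset.Nat.sum_antidiagonal_succ]
      simp [gaussRec_zero_right, gaussRec_eq_zero]
  | succ m ih =>
    intro j
    rcases j with _ | j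
    · simp [gaussRec_zero_right]
    · rw [show m + 1 + n = (m + n) + 1 by omega, gaussRec_succ, ih j, ih (j + 1),
        Finset.Nat.sum_antidiagonal_succ, Finset.Nat.sum_antidiagonal_succ, mul_add,
        Finset.mul_sum, add_left_comm, ← Finset.sum_add_distrib]
      congr 1
      · simp only [gaussRec_zero_right, Nat.sub_zero]; ring
      · refine Finset.sum_congr rfl fun p hp => ?_
        obtain ⟨k, l⟩ := p
        have hkl : k + l = j := by simpa using hp
        simp only [gaussRec_succ]
        rw [show m + 1 - (k + 1) = m - k by omega]
        by_cases hk : k + 1 ≤ m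
        · obtain ⟨d, rfl⟩ := Nat.exists_eq_add_of_le hk
          rw [show k + 1 + d - k = d + 1 by omega, show k + 1 + d - (k + 1) = d by omega, ← hkl]
          ring
        · rw [gaussRec_eq_zero m (k + 1) (by omega)]; ring

lemma triZ_two (n : ℤ) : 2 * triZ n = n * (n + 1) :=
  Int.mul_ediv_cancel' (Int.even_mul_succ_self n).two_dvd

lemma qtrinom_eq (m a k : ℕ) :
    qtrinom m a k = qbin ((a + k + m : ℕ) : ℤ) ((a + k : ℕ) : ℤ) * gaussRec (a + k) k := by
  have h1 := gaussRec_mul (a + k + m) (a + k) m rfl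
  have h2 := gaussRec_mul (a + k) k a (by omega)
  rw [qbin_eq]
  unfold qtrinom
  rw [if_pos (by omega), show ((m : ℤ) + a + k).toNat = a + k + m by omega]
  simp only [Int.toNat_natCast]
  rw [div_eq_iff (mul_ne_zero (mul_ne_zero (qPoch_ne _) (qPoch_ne _)) (qPoch_ne _)), ← h1, ← h2]
  ring

/-- Identity (4.8): for `0 ≤ i ≤ M`, `0 ≤ i ≤ L`, `0 ≤ j ≤ L`,
`q^{T_i+T_j} [M; i] [L; j]
  = ∑_k q^{T_{i+j-k}+T_k} [M; M-i, i-k, k] [L-i; j-k]`. -/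
theorem finite_schur_identity (L M i j : ℤ)
    (hi : 0 ≤ i) (hiM : i ≤ M) (hiL : i ≤ L) (hj : 0 ≤ j) (hjL : j ≤ L) :
    (RatFunc.X : RatFunc ℚ) ^ (triZ i + triZ j) * qbin M i * qbin L j =
    ∑ k ∈ Finset.Icc (0 : ℤ) (min i j),
      (RatFunc.X : RatFunc ℚ) ^ (triZ (i + j - k) + triZ k) *
        qtrinom (M - i) (i - k) k * qbin (L - i) (j - k) := by
  obtain ⟨m, rfl⟩ : ∃ m : ℕ, M = i + m := ⟨(M - i).toNat, by omega⟩
  obtain ⟨n, rfl⟩ : ∃ n : ℕ, L = i + n := ⟨(L - i).toNat, by omega⟩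
  lift i to ℕ using hi
  lift j to ℕ using hj
  have hX : (RatFunc.X : RatFunc ℚ) ≠ 0 := RatFunc.X_ne_zero
  rw [← Nat.cast_add i n, qbin_eq (i + n) j, gaussRec_vandermonde, Finset.mul_sum]
  symm
  refine Finset.sum_of_injOn (fun k : ℤ => (k.toNat, j - k.toNat)) ?_ ?_ ?_ ?_
  · intro a ha b hb hab
    simp only [Finset.coe_Icc, Set.mem_Icc] at ha hb
    simp only [Prod.mk.injEq] at hab
    omega
  · intro a ha
    simp only [Finset.coe_Icc, Set.mem_Icc] at ha
    simp only [Finset.mem_coe, Finset.HasAntidiagonal.mem_antidiagonal]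
    omega
  · rintro ⟨k, l⟩ hp hn
    rw [Finset.HasAntidiagonal.mem_antidiagonal] at hp
    simp only at hp
    have hk : i < k := by
      by_contra hk
      refine hn ⟨(k : ℤ), ?_, ?_⟩
      · simp only [Finset.coe_Icc, Set.mem_Icc]; omega
      · simp only [Int.toNat_natCast, Prod.mk.injEq, true_and]; omega
    simp only [gaussRec_eq_zero i k hk]
    ring
  · intro k hk
    rw [Finset.mem_Icc] at hk
    lift k to ℕ using hk.1
    obtain ⟨a, rfl⟩ : ∃ a, i = a + k := ⟨i - k, by omega⟩
    obtain ⟨b, rfl⟩ : ∃ b, j = b + k := ⟨j - k, by omega⟩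
    simp only [Int.toNat_natCast, Nat.add_sub_cancel]
    rw [show ((a + k : ℕ) : ℤ) + m - ((a + k : ℕ) : ℤ) = (m : ℤ) by omega,
      show ((a + k : ℕ) : ℤ) - (k : ℤ) = (a : ℤ) by omega,
      show ((b + k : ℕ) : ℤ) - (k : ℤ) = (b : ℤ) by omega,
      show ((a + k + n : ℕ) : ℤ) - ((a + k : ℕ) : ℤ) = (n : ℤ) by omega,
      qtrinom_eq, qbin_eq n b, ← Nat.cast_add (a + k) m]
    have e : triZ (((a + k : ℕ) : ℤ) + ((b + k : ℕ) : ℤ) - k) + triZ k =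
        triZ ((a + k : ℕ) : ℤ) + triZ ((b + k : ℕ) : ℤ) + ((a * b : ℕ) : ℤ) := by
      have h1 := triZ_two (((a + k : ℕ) : ℤ) + ((b + k : ℕ) : ℤ) - k)
      have h2 := triZ_two k
      have h3 := triZ_two ((a + k : ℕ) : ℤ)
      have h4 := triZ_two ((b + k : ℕ) : ℤ)
      push_cast at *
      linarith
    rw [e, zpow_add₀ hX _ ((a * b : ℕ) : ℤ), zpow_natCast]
    ring
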